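/- For an n×n upper triangular complex matrix X with diagonal entries x_{11}, …, x_{nn}, we have det(I_n + X*X) ≥ ∏_{i=1}^n (1 + |x_{ii}|²), with equality if and only if X is diagonal. -/

import Mathlib

open Matrix
open scoped ComplexOrder

theorem drury_posDef (n : ℕ) (Y : Matrix (Fin n) (Fin n) ℂ) : (1 + Yᴴ * Y).PosDef :=
  Matrix.PosDef.one.add_posSemidef (Matrix.posSemidef_conjTranspose_mul_self Y)

/-- The block diagonal matrix `diag(1, M)`. -/
def druryN {n : ℕ} (M : Matrix (Fin n) (Fin n) ℂ) : Matrix (Fin (n+1)) (Fin (n+1)) ℂ :=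
  Matrix.of (Fin.cons (Fin.cons 1 (fun _ => 0)) (fun i => Fin.cons 0 (M i)))

theorem druryN_det {n : ℕ} (M : Matrix (Fin n) (Fin n) ℂ) : (druryN M).det = M.det := by
  rw [Matrix.det_succ_column_zero, Fin.sum_univ_succ]
  have : (druryN M).submatrix (Fin.succAbove 0) Fin.succ = M := by
    ext i j; simp [druryN]
  rw [this]
  simp [druryN]

theorem drury_step (n : ℕ) (X : Matrix (Fin (n+1)) (Fin (n+1)) ℂ)
    (hX : ∀ i j : Fin (n+1), j < i → X i j = 0) (Y : Matrix (Fin n) (Fin n) ℂ)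
    (hY : Y = X.submatrix Fin.succ Fin.succ) (r : Fin n → ℂ) (hr : r = fun j => X 0 j.succ) :
    (1 + Xᴴ * X).det = (1 + Yᴴ * Y).det *
      (1 + (‖X 0 0‖ ^ 2 : ℝ) + r ⬝ᵥ ((1 + Yᴴ * Y)⁻¹ *ᵥ star r)) := by
  have hM := drury_posDef n Y
  set M := 1 + Yᴴ * Y with hMdef
  have hu : IsUnit M.det := (Matrix.isUnit_iff_isUnit_det _).1 hM.isUnit
  have hN : IsUnit (druryN M).det := by rwa [druryN_det]
  have h1 : 1 + Xᴴ * X = druryN M +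
      replicateCol Unit (star (X 0)) * replicateRow Unit (X 0) := by
    ext i j
    have h0 : ∀ i : Fin n, X i.succ 0 = 0 := fun i => hX _ _ (Fin.succ_pos i)
    refine Fin.cases ?_ (fun i => ?_) i <;> refine Fin.cases ?_ (fun j => ?_) j <;>
      simp [druryN, hMdef, hY, Matrix.mul_apply, Fin.sum_univ_succ, h0, Matrix.one_apply,
        Fin.succ_ne_zero, (Fin.succ_ne_zero _).symm] <;> ring
  have h2 : (druryN M)⁻¹ *ᵥ star (X 0) = Fin.cons (star (X 0 0)) (M⁻¹ *ᵥ star r) := by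
    have : star (X 0) = druryN M *ᵥ (Fin.cons (star (X 0 0)) (M⁻¹ *ᵥ star r)) := by
      ext i
      refine Fin.cases ?_ (fun i => ?_) i
      · simp [druryN, Matrix.mulVec, dotProduct, Fin.sum_univ_succ]
      · have : (M *ᵥ (M⁻¹ *ᵥ star r)) i = star r i := by
          rw [Matrix.mulVec_mulVec, Matrix.mul_nonsing_inv _ hu, Matrix.one_mulVec]
        have e : (druryN M *ᵥ (Fin.cons (star (X 0 0)) (M⁻¹ *ᵥ star r))) i.succ
            = (M *ᵥ (M⁻¹ *ᵥ star r)) i := by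
          generalize M⁻¹ *ᵥ star r = w
          simp [druryN, Matrix.mulVec, dotProduct, Fin.sum_univ_succ]
        rw [e, this, hr]; rfl
    rw [this, Matrix.mulVec_mulVec, Matrix.nonsing_inv_mul _ hN, Matrix.one_mulVec]
  rw [h1, Matrix.det_add_replicateCol_mul_replicateRow hN, druryN_det]
  congr 1
  rw [Matrix.mul_assoc, ← Matrix.replicateCol_mulVec, h2, Matrix.det_unique, Matrix.add_apply,
    Matrix.replicateRow_mul_replicateCol_apply]
  generalize M⁻¹ *ᵥ star r = w
  have : X 0 0 * star (X 0 0) = ((‖X 0 0‖ ^ 2 : ℝ) : ℂ) := by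
    simpa using Complex.mul_conj' (X 0 0)
  rw [← this, hr]
  simp [dotProduct, Fin.sum_univ_succ, add_assoc]

/-- **Drury's lemma.** For an upper triangular complex matrix `X`,
`det(I + X*X) ≥ ∏ᵢ (1 + |xᵢᵢ|²)`, with equality if and only if `X` is diagonal. -/
theorem det_one_add_conjTranspose_mul_self_ge_prod (n : ℕ) (X : Matrix (Fin n) (Fin n) ℂ)
    (hX : ∀ i j : Fin n, j < i → X i j = 0) :
    (∏ i : Fin n, (1 + ‖X i i‖ ^ 2)) ≤ (1 + Xᴴ * X).det.re ∧
    ((1 + Xᴴ * X).det.re = ∏ i : Fin n, (1 + ‖X i i‖ ^ 2) ↔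
      X = Matrix.diagonal fun i => X i i) := by
  induction n with
  | zero => 
    refine ⟨by simp, by simp; exact Subsingleton.elim _ _⟩
  | succ n ih =>
    obtain ⟨Y, hY⟩ : ∃ Y, Y = X.submatrix Fin.succ Fin.succ := ⟨_, rfl⟩
    obtain ⟨r, hr⟩ : ∃ r : Fin n → ℂ, r = fun j => X 0 j.succ := ⟨_, rfl⟩
    have hs := drury_step n X hX Y hY r hr
    obtain ⟨ih1, ih2⟩ := ih Y (fun i j h => by
      rw [hY]; exact hX _ _ (Fin.succ_lt_succ_iff.2 h))
    have hM := drury_posDef n Y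
    have hd := Complex.pos_iff.1 hM.det_pos
    set q := r ⬝ᵥ ((1 + Yᴴ * Y)⁻¹ *ᵥ star r) with hq
    have hqpos : r ≠ 0 → 0 < q.re := by
      intro h
      have := hM.inv.dotProduct_mulVec_pos (x := star r) (by simpa using h)
      rw [star_star] at this
      exact (Complex.pos_iff.1 this).1
    have hq0 : r = 0 → q.re = 0 := by
      intro h; simp [hq, h]
    have hqn : 0 ≤ q.re := by
      by_cases h : r = 0
      · rw [hq0 h]
      · exact (hqpos h).le
    have hre : (1 + Xᴴ * X).det.re = (1 + Yᴴ * Y).det.re * (1 + ‖X 0 0‖ ^ 2 + q.re) := by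
      rw [hs, Complex.mul_re, ← hd.2]
      simp [-Complex.ofReal_pow]
    have hP : ∏ i : Fin (n+1), (1 + ‖X i i‖ ^ 2) =
        (∏ i : Fin n, (1 + ‖Y i i‖ ^ 2)) * (1 + ‖X 0 0‖ ^ 2) := by
      rw [Fin.prod_univ_succ, mul_comm, hY]; rfl
    have hdiag : X = Matrix.diagonal (fun i => X i i) ↔
        r = 0 ∧ Y = Matrix.diagonal fun i => Y i i := by
      constructor
      · intro h
        have hoff : ∀ i j, i ≠ j → X i j = 0 := fun i j hij => by
          rw [h]; exact Matrix.diagonal_apply_ne _ hij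
        constructor
        · rw [hr]; ext j; exact hoff _ _ (Fin.succ_ne_zero j).symm
        · ext i j
          by_cases hij : i = j
          · subst hij; simp
          · rw [Matrix.diagonal_apply_ne _ hij, hY]
            exact hoff _ _ (fun h => hij (Fin.succ_injective _ h))
      · rintro ⟨h1, h2⟩
        ext i j
        by_cases hij : i = j
        · subst hij; simp
        · rw [Matrix.diagonal_apply_ne _ hij]
          rcases lt_or_gt_of_ne hij with h | h
          · obtain ⟨j, rfl⟩ := Fin.exists_succ_eq.2 (Fin.ne_zero_of_lt h)
            induction i using Fin.cases with
            | zero => have := congrFun h1 j; rwa [hr] at this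
            | succ i =>
              have := congrFun (congrFun h2 i) j
              rw [Matrix.diagonal_apply_ne _ (fun h => hij (by rw [h])), hY] at this
              exact this
          · exact hX _ _ h
    rw [hre, hP, hdiag, ← ih2]
    have hdp := hd.1
    have ha : 0 < 1 + ‖X 0 0‖ ^ 2 := by positivity
    generalize (1 + Yᴴ * Y).det.re = d at *
    generalize (∏ i : Fin n, (1 + ‖Y i i‖ ^ 2)) = p at *
    generalize 1 + ‖X 0 0‖ ^ 2 = a at *
    have hdq : 0 ≤ d * q.re := mul_nonneg hdp.le hqn
    have hpa : p * a ≤ d * a := mul_le_mul_of_nonneg_right ih1 ha.le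
    refine ⟨by linarith [mul_add d a q.re], fun h => ?_, fun ⟨h1, h2⟩ => ?_⟩
    · rw [mul_add] at h
      constructor
      · by_contra hne
        have := mul_pos hdp (hqpos hne)
        linarith
      · exact mul_right_cancel₀ ha.ne' (by linarith)
    · rw [hq0 h1, h2, add_zero]
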